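/- Fix an integer m ≥ 2 and set δ = Δ/2^n. There is a constant C > 0, depending only on n, Δ and m, with the following property: for every t ∈ 𝒜_m, every monic real polynomial P(y) = y^n + a_{n−1}y^{n−1} + ⋯ + a₀ of degree n, every real x, and all reals K, L with m < K and K + m < L, one has | Σ_{K < k ≤ L} e(t·P(k) + x·k)/k | ≤ C·( K^{−δ} + L^{−δ} ), the sum being over integers k with K < k ≤ L. -/

import Mathlib

open Filter Finset MeasureTheory

/-- An approximant to a real number `t`: a reduced fraction `u/q` with `q ≥ 1`
and `|t - u/q| < 1/q²`. -/
def IsApproximant (t : ℝ) (u q : ℤ) : Prop :=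
  1 ≤ q ∧ Int.gcd u q = 1 ∧ |t - (u : ℝ) / (q : ℝ)| < 1 / (q : ℝ) ^ 2

/-- The set `𝒜_m`: `t ∈ [0,1]` such that for every real `M ≥ m` there is an
approximant `u/q` to `t` with `M^Δ < q ≤ M^(n-Δ)`. -/
def Aset (n : ℕ) (Δ : ℝ) (m : ℤ) : Set ℝ :=
  {t | t ∈ Set.Icc (0 : ℝ) 1 ∧ ∀ M : ℝ, (m : ℝ) ≤ M →
    ∃ u q : ℤ, IsApproximant t u q ∧ M ^ Δ < (q : ℝ) ∧ (q : ℝ) ≤ M ^ ((n : ℝ) - Δ)}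

/-- The set `𝒜`: `t ∈ [0,1]` such that for all sufficiently large `M` there is an
approximant `u/q` to `t` with `M^Δ < q ≤ M^(n-Δ)`. -/
def Aall (n : ℕ) (Δ : ℝ) : Set ℝ :=
  {t | t ∈ Set.Icc (0 : ℝ) 1 ∧ ∃ M₀ : ℝ, ∀ M : ℝ, M₀ ≤ M →
    ∃ u q : ℤ, IsApproximant t u q ∧ M ^ Δ < (q : ℝ) ∧ (q : ℝ) ≤ M ^ ((n : ℝ) - Δ)}

/-- The set `ℬ_{m,α}`: `t ∈ (0,1]` such that for every real `M ≥ m·t^(-α)` there is an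
approximant `u/q` to `t` with `M^Δ < q ≤ M^(n-Δ)`. -/
def Bset (n : ℕ) (Δ : ℝ) (m : ℤ) (α : ℝ) : Set ℝ :=
  {t | t ∈ Set.Ioc (0 : ℝ) 1 ∧ ∀ M : ℝ, (m : ℝ) * t ^ (-α) ≤ M →
    ∃ u q : ℤ, IsApproximant t u q ∧ M ^ Δ < (q : ℝ) ∧ (q : ℝ) ≤ M ^ ((n : ℝ) - Δ)}

/-- `e(ξ) = exp(2πiξ)`. -/
noncomputable def ee (ξ : ℝ) : ℂ := Complex.exp (2 * Real.pi * Complex.I * ξ)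


lemma div_bound (ε : ℝ) (hε : 0 < ε) : ∃ C : ℝ, 1 ≤ C ∧ ∀ n : ℕ, n ≠ 0 →
    ((n.divisors.card : ℕ) : ℝ) ≤ C * (n : ℝ) ^ ε := by
  set A : ℝ := 1 + 1 / (ε * Real.log 2) with hA
  have hl2 : 0 < Real.log 2 := Real.log_pos (by norm_num)
  have hel : 0 < ε * Real.log 2 := by positivity
  have hA1 : 1 ≤ A := by
    have : 0 < 1 / (ε * Real.log 2) := by positivity
    linarith
  obtain ⟨P0, hP0⟩ := exists_nat_gt ((2:ℝ) ^ (1/ε))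
  refine ⟨A ^ P0, one_le_pow₀ hA1, ?_⟩
  intro n hn
  rw [Nat.card_divisors hn]
  have hfac : (n:ℝ) ^ ε = ∏ p ∈ n.primeFactors, ((p:ℝ) ^ (n.factorization p)) ^ ε := by
    conv_lhs => rw [← Nat.prod_factorization_pow_eq_self hn]
    rw [Finsupp.prod, Nat.support_factorization]
    push_cast
    rw [Real.finsetProd_rpow]
    intro i _
    positivity
  have hterm : ∀ p ∈ n.primeFactors, ((n.factorization p : ℝ) + 1) ≤
      (if p < P0 then A else 1) * ((p:ℝ) ^ (n.factorization p)) ^ ε := by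
    intro p hp
    have hp2 : 2 ≤ p := (Nat.prime_of_mem_primeFactors hp).two_le
    have hp2' : (2:ℝ) ≤ p := by exact_mod_cast hp2
    set v := n.factorization p
    have e1 : ((p:ℝ) ^ v) ^ ε = ((p:ℝ) ^ ε) ^ v := by
      rw [← Real.rpow_natCast, ← Real.rpow_mul (by positivity), mul_comm, Real.rpow_mul (by positivity),
        Real.rpow_natCast]
    split_ifs with h
    · have h2 : (2:ℝ) ^ ε ≤ (p:ℝ) ^ ε := Real.rpow_le_rpow (by norm_num) hp2' hε.le
      have h3 : 1 + (v:ℝ) * (ε * Real.log 2) ≤ ((p:ℝ) ^ v) ^ ε := by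
        rw [e1]
        calc 1 + (v:ℝ) * (ε * Real.log 2) ≤ Real.exp ((v:ℝ) * (ε * Real.log 2)) := by
              have := Real.add_one_le_exp ((v:ℝ) * (ε * Real.log 2)); linarith
          _ = ((2:ℝ) ^ ε) ^ v := by
              rw [Real.exp_nat_mul, Real.rpow_def_of_pos (by norm_num), mul_comm ε]
          _ ≤ _ := by gcongr
      calc (v:ℝ) + 1 ≤ A * (1 + (v:ℝ) * (ε * Real.log 2)) := by
            rw [hA]
            have hv : (0:ℝ) ≤ v := by positivity
            have : (1 + 1 / (ε * Real.log 2)) * (1 + (v:ℝ) * (ε * Real.log 2)) =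
              1 + (v:ℝ) * (ε * Real.log 2) + 1 / (ε * Real.log 2) + v := by field_simp; ring
            rw [this]
            have : 0 < 1 / (ε * Real.log 2) := by positivity
            nlinarith [mul_nonneg hv hel.le]
        _ ≤ _ := by gcongr
    · rw [one_mul, e1]
      have h2 : (2:ℝ) ≤ (p:ℝ) ^ ε := by
        have : (2:ℝ) ^ (1/ε) ≤ p := hP0.le.trans (by exact_mod_cast not_lt.mp h)
        calc (2:ℝ) = ((2:ℝ) ^ (1/ε)) ^ ε := by
              rw [← Real.rpow_mul (by norm_num)]; field_simp; simp
          _ ≤ _ := Real.rpow_le_rpow (by positivity) this hε.le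
      calc (v:ℝ) + 1 ≤ (2:ℝ)^v := by exact_mod_cast Nat.lt_two_pow_self
        _ ≤ _ := by gcongr
  push_cast
  calc ∏ p ∈ n.primeFactors, ((n.factorization p : ℝ) + 1) ≤
      ∏ p ∈ n.primeFactors, (if p < P0 then A else 1) * ((p:ℝ) ^ (n.factorization p)) ^ ε := by
        apply Finset.prod_le_prod
        · intros; positivity
        · exact hterm
    _ = (∏ p ∈ n.primeFactors, (if p < P0 then A else 1)) * (n:ℝ) ^ ε := by
        rw [Finset.prod_mul_distrib, hfac]
    _ ≤ _ := by
        gcongr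
        rw [Finset.prod_ite]
        simp only [Finset.prod_const, one_pow, mul_one]
        apply pow_le_pow_right₀ hA1
        calc _ ≤ (Finset.range P0).card := by
              apply Finset.card_le_card
              intro x hx
              simp at hx ⊢
              exact hx.2
          _ = P0 := by simp

lemma vdc (z : ℕ → ℂ) (M : ℕ) : ‖∑ k ∈ range M, z k‖ ^ 2 ≤
    2 * ∑ h ∈ range M, ‖∑ k ∈ range (M - h), z (k + h) * (starRingEnd ℂ) (z k)‖ := by
  have key : ‖∑ k ∈ range M, z k‖ ^ 2 ≤
      2 * (∑ h ∈ range M, ∑ k ∈ range (M - h), z (k + h) * (starRingEnd ℂ) (z k)).re := by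
    induction M with
    | zero => simp
    | succ M ih =>
      have e : ∑ h ∈ range (M+1), ∑ k ∈ range (M + 1 - h), z (k + h) * (starRingEnd ℂ) (z k) =
          (∑ h ∈ range M, ∑ k ∈ range (M - h), z (k + h) * (starRingEnd ℂ) (z k)) +
          (z M * (starRingEnd ℂ) (∑ k ∈ range M, z k) + z M * (starRingEnd ℂ) (z M)) := by
        have e1 : ∀ h ∈ range (M+1), ∑ k ∈ range (M + 1 - h), z (k + h) * (starRingEnd ℂ) (z k) =
            (∑ k ∈ range (M - h), z (k + h) * (starRingEnd ℂ) (z k)) +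
              z M * (starRingEnd ℂ) (z (M - h)) := by
          intro h hh
          have hh' : h ≤ M := by simp at hh; omega
          rw [show M + 1 - h = (M - h) + 1 by omega, Finset.sum_range_succ,
            show M - h + h = M by omega]
        rw [Finset.sum_congr rfl e1, Finset.sum_add_distrib, Finset.sum_range_succ]
        have e2 := Finset.sum_range_reflect (fun j => z M * (starRingEnd ℂ) (z j)) (M+1)
        simp only [Nat.add_sub_cancel] at e2
        have e3 : ∀ j, M + 1 - 1 - j = M - j := by intro j; omega
        rw [e2, Finset.sum_range_succ, map_sum, Finset.mul_sum]
        simp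
      rw [e, Finset.sum_range_succ]
      have hn : ‖(∑ k ∈ range M, z k) + z M‖ ^ 2 = ‖∑ k ∈ range M, z k‖ ^ 2 + ‖z M‖^2 +
          2 * (z M * (starRingEnd ℂ) (∑ k ∈ range M, z k)).re := by
        rw [← Complex.normSq_eq_norm_sq, ← Complex.normSq_eq_norm_sq, ← Complex.normSq_eq_norm_sq,
          Complex.normSq_add]
        congr 2
        simp [Complex.mul_re]; ring
      rw [hn, Complex.add_re, Complex.add_re, Complex.mul_conj, Complex.normSq_eq_norm_sq,
        Complex.ofReal_re]
      nlinarith [sq_nonneg ‖z M‖]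
  refine key.trans ?_
  gcongr
  exact (Complex.re_le_norm _).trans (norm_sum_le _ _)

lemma ee_add (a b : ℝ) : ee (a + b) = ee a * ee b := by
  simp only [ee, ← Complex.exp_add]; congr 1; push_cast; ring

lemma ee_norm (a : ℝ) : ‖ee a‖ = 1 := by
  have : (2 * Real.pi * Complex.I * a : ℂ) = ((2 * Real.pi * a : ℝ) : ℂ) * Complex.I := by
    push_cast; ring
  rw [ee, this, Complex.norm_exp_ofReal_mul_I]

lemma ee_sub (a b : ℝ) : ee (a - b) = ee a * (starRingEnd ℂ) (ee b) := by
  simp only [ee, ← Complex.exp_conj, ← Complex.exp_add]; congr 1; simp [map_ofNat (starRingEnd ℂ) 2]; ring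

lemma ee_int (a : ℤ) : ee a = 1 := by
  rw [ee, Complex.exp_eq_one_iff]; exact ⟨a, by push_cast; ring⟩

/-- distance to nearest integer -/
noncomputable def nd (a : ℝ) : ℝ := |a - round a|

lemma nd_nonneg (a : ℝ) : 0 ≤ nd a := abs_nonneg _

lemma nd_le (a : ℝ) (z : ℤ) : nd a ≤ |a - z| := round_le a z

noncomputable def FF (N : ℕ) (a : ℝ) : ℝ := N / (1 + N * nd a)

lemma FF_nonneg (N : ℕ) (a : ℝ) : 0 ≤ FF N a := by
  have := nd_nonneg a
  unfold FF; positivity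

lemma FF_le (N : ℕ) (a : ℝ) : FF N a ≤ N := by
  have := nd_nonneg a
  unfold FF
  apply div_le_self (by positivity)
  have : 0 ≤ N * nd a := by positivity
  linarith

lemma FF_le_inv (N : ℕ) (a x : ℝ) (hx : 0 < x) (h : x ≤ nd a) : FF N a ≤ 1 / x := by
  have := nd_nonneg a
  unfold FF
  rw [div_le_div_iff₀ (by positivity) hx]
  have : (N:ℝ) * x ≤ N * nd a := by gcongr
  linarith

lemma ee_sub_one (a : ℝ) : 4 * nd a ≤ ‖ee a - 1‖ := by
  have h1 : ee a = ee (a - round a) := by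
    conv_lhs => rw [show a = (a - round a) + ((round a : ℤ) : ℝ) by ring, ee_add, ee_int, mul_one]
  rw [h1]
  have h2 : ee (a - round a) = Complex.exp (Complex.I * ((2 * Real.pi * (a - round a) : ℝ) : ℂ)) := by
    rw [ee]; congr 1; push_cast; ring
  rw [h2, Complex.norm_exp_I_mul_ofReal_sub_one, nd]
  have hb := abs_sub_round a
  set y := a - round a
  have hs := Real.mul_abs_le_abs_sin (x := Real.pi * y) (by
    rw [abs_mul, abs_of_pos Real.pi_pos]; nlinarith [Real.pi_pos])
  rw [norm_mul, Real.norm_eq_abs, Real.norm_eq_abs, show 2 * Real.pi * y / 2 = Real.pi * y by ring]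
  rw [abs_mul, abs_of_pos Real.pi_pos] at hs
  have : 2 / Real.pi * (Real.pi * |y|) = 2 * |y| := by field_simp
  rw [this] at hs
  rw [abs_two]; linarith

lemma lin_sum (N M : ℕ) (hM : M ≤ N) (a b : ℝ) :
    ‖∑ k ∈ range M, ee (a * (k:ℝ) + b)‖ ≤ 2 * FF N a := by
  have hMN : (M:ℝ) ≤ N := by exact_mod_cast hM
  have hn0 := nd_nonneg a
  have e : ∑ k ∈ range M, ee (a * (k:ℝ) + b) = ee b * ∑ k ∈ range M, (ee a)^k := by
    rw [Finset.mul_sum]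
    apply Finset.sum_congr rfl
    intro k _
    rw [ee_add, mul_comm]
    congr 1
    simp only [ee, ← Complex.exp_nat_mul]
    congr 1; push_cast; ring
  rw [e, norm_mul, ee_norm, one_mul]
  have b1 : ‖∑ k ∈ range M, (ee a)^k‖ ≤ N := by
    refine (norm_sum_le _ _).trans ?_
    simp [ee_norm, hMN]
  have b2 : ‖∑ k ∈ range M, (ee a)^k‖ * (4 * nd a) ≤ 2 := by
    calc _ ≤ ‖∑ k ∈ range M, (ee a)^k‖ * ‖ee a - 1‖ := by gcongr; exact ee_sub_one a
      _ = ‖ee a ^ M - 1‖ := by rw [← norm_mul, geom_sum_mul]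
      _ ≤ ‖ee a ^ M‖ + ‖(1:ℂ)‖ := norm_sub_le _ _
      _ = 2 := by simp [ee_norm]; norm_num
  unfold FF
  rw [← mul_div_assoc, le_div_iff₀ (by positivity)]
  have : (N:ℝ) * (‖∑ k ∈ range M, (ee a)^k‖ * (4 * nd a)) ≤ N * 2 := by gcongr
  nlinarith

noncomputable def WW (N : ℕ) : ℕ → ℝ → ℝ
  | 0, a => FF N a
  | d+1, a => ∑ h ∈ range N, WW N d (((d:ℝ) + 2) * h * a)

lemma WW_nonneg (N d : ℕ) (a : ℝ) : 0 ≤ WW N d a := by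
  induction d generalizing a with
  | zero => exact FF_nonneg _ _
  | succ d ih => exact Finset.sum_nonneg fun _ _ => ih _

lemma WW_le (N d : ℕ) (a : ℝ) : WW N d a ≤ (N:ℝ) ^ (d+1) := by
  induction d generalizing a with
  | zero => simpa [WW] using FF_le _ _
  | succ d ih =>
    calc WW N (d+1) a ≤ ∑ h ∈ range N, (N:ℝ)^(d+1) := Finset.sum_le_sum fun _ _ => ih _
      _ = _ := by simp; ring

open Polynomial in
lemma diff_poly (d : ℕ) (Q : Polynomial ℝ) (hQ : Q.natDegree ≤ d + 2) (h : ℝ) :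
    (taylor h Q - Q).natDegree ≤ d + 1 ∧
    (taylor h Q - Q).coeff (d+1) = ((d:ℝ) + 2) * h * Q.coeff (d+2) := by
  constructor
  · rw [Polynomial.natDegree_le_iff_coeff_eq_zero]
    intro N hN
    rw [coeff_sub]
    rcases Nat.lt_or_ge (d+2) N with h1 | h1
    · rw [coeff_eq_zero_of_natDegree_lt (by rw [natDegree_taylor]; omega),
        coeff_eq_zero_of_natDegree_lt (by omega), sub_zero]
    · have : N = d + 2 := by omega
      subst this
      rw [taylor_coeff]
      have hd : (hasseDeriv (d+2) Q).natDegree < 1 := by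
        have := natDegree_hasseDeriv_le Q (d+2); omega
      rw [eval_eq_sum_range' hd]
      simp [hasseDeriv_coeff]
  · rw [coeff_sub, taylor_coeff]
    have hd : (hasseDeriv (d+1) Q).natDegree < 2 := by
      have := natDegree_hasseDeriv_le Q (d+1); omega
    rw [eval_eq_sum_range' hd]
    simp only [Finset.sum_range_succ, Finset.range_zero, Finset.sum_empty, hasseDeriv_coeff]
    rw [show 1 + (d+1) = d+2 by ring, show 0 + (d+1) = d + 1 by ring, Nat.choose_succ_self_right]
    simp
    ring

open Polynomial in
lemma weyl_diff (N : ℕ) (hN : 1 ≤ N) (d : ℕ) : ∀ (Q : Polynomial ℝ), Q.natDegree ≤ d + 1 → ∀ M ≤ N,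
    ‖∑ k ∈ range M, ee (Q.eval (k:ℝ))‖ ^ (2^d) * (N:ℝ) ^ (d+1) ≤
      2 ^ (2^d) * (N:ℝ) ^ (2^d) * WW N d (Q.coeff (d+1)) := by
  have hN0 : (0:ℝ) < N := by exact_mod_cast hN
  induction d with
  | zero =>
    intro Q hQ M hM
    have e : ∀ k ∈ range M, ee (Q.eval (k:ℝ)) = ee (Q.coeff 1 * (k:ℝ) + Q.coeff 0) := by
      intro k _
      rw [eval_eq_sum_range' (n := 2) (by omega)]
      simp [Finset.sum_range_succ]
      rw [add_comm]
    rw [Finset.sum_congr rfl e]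
    have := lin_sum N M hM (Q.coeff 1) (Q.coeff 0)
    simp [WW]
    nlinarith
  | succ d ih =>
    intro Q hQ M hM
    set S := ‖∑ k ∈ range M, ee (Q.eval (k:ℝ))‖ with hS
    set T : ℕ → ℝ := fun h => ‖∑ k ∈ range (M - h), ee ((taylor (h:ℝ) Q - Q).eval (k:ℝ))‖ with hT
    have h1 : S ^ 2 ≤ 2 * ∑ h ∈ range N, T h := by
      refine (vdc _ M).trans ?_
      gcongr
      calc _ = ∑ h ∈ range M, T h := by
            apply Finset.sum_congr rfl
            intro h _
            simp only [hT]
            congr 1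
            apply Finset.sum_congr rfl
            intro k _
            rw [← ee_sub, eval_sub, taylor_eval]
            push_cast; ring_nf
        _ ≤ _ := by
            apply Finset.sum_le_sum_of_subset_of_nonneg
            · simpa using hM
            · intros; exact norm_nonneg _
    have h2 : ∀ h ∈ range N, T h ^ (2^d) * (N:ℝ)^(d+1) ≤
        2 ^ (2^d) * (N:ℝ) ^ (2^d) * WW N d (((d:ℝ) + 2) * h * Q.coeff (d+2)) := by
      intro h _
      obtain ⟨a1, a2⟩ := diff_poly d Q hQ h
      have := ih _ a1 (M - h) (by omega)
      rwa [a2] at this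
    have h3 : (∑ h ∈ range N, T h) ^ (2^d) * N ≤ (N:ℝ)^(2^d) * ∑ h ∈ range N, T h ^ (2^d) := by
      have := pow_sum_div_card_le_sum_pow (s := range N) (f := T)
        (fun i _ => norm_nonneg _) (2^d - 1)
      rw [Nat.sub_add_cancel Nat.one_le_two_pow, card_range, div_le_iff₀ (by positivity)] at this
      calc _ ≤ (∑ h ∈ range N, T h ^ (2^d)) * (N:ℝ)^(2^d-1) * N := by gcongr
        _ = (∑ h ∈ range N, T h ^ (2^d)) * (N:ℝ)^(2^d-1+1) := by ring
        _ = _ := by rw [Nat.sub_add_cancel Nat.one_le_two_pow]; ring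
    have h4 : (∑ h ∈ range N, T h ^ (2^d)) * (N:ℝ)^(d+1) ≤
        2 ^ (2^d) * (N:ℝ) ^ (2^d) * WW N (d+1) (Q.coeff (d+2)) := by
      rw [WW, Finset.sum_mul, Finset.mul_sum]
      exact Finset.sum_le_sum h2
    calc S ^ (2^(d+1)) * (N:ℝ)^(d+1+1) = (S^2)^(2^d) * (N:ℝ) * (N:ℝ)^(d+1) := by
          rw [← pow_mul]; ring
      _ ≤ (2 * ∑ h ∈ range N, T h)^(2^d) * (N:ℝ) * (N:ℝ)^(d+1) := by gcongr
      _ = 2^(2^d) * ((∑ h ∈ range N, T h)^(2^d) * N) * (N:ℝ)^(d+1) := by rw [mul_pow]; ring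
      _ ≤ 2^(2^d) * ((N:ℝ)^(2^d) * ∑ h ∈ range N, T h ^ (2^d)) * (N:ℝ)^(d+1) := by gcongr
      _ = 2^(2^d) * (N:ℝ)^(2^d) * ((∑ h ∈ range N, T h ^ (2^d)) * (N:ℝ)^(d+1)) := by ring
      _ ≤ 2^(2^d) * (N:ℝ)^(2^d) * (2 ^ (2^d) * (N:ℝ) ^ (2^d) * WW N (d+1) (Q.coeff (d+2))) := by
          gcongr
      _ = _ := by
          rw [show 2^(2^(d+1)) = (2:ℝ)^(2^d) * 2^(2^d) by rw [← pow_add]; congr 1; ring,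
            show (N:ℝ)^(2^(d+1)) = (N:ℝ)^(2^d) * (N:ℝ)^(2^d) by rw [← pow_add]; congr 1; ring]
          ring

/-- collapse products -/
lemma collapse (G : ℕ → ℝ) (hG : ∀ w, 0 ≤ G w) (A B D : ℕ)
    (hD : ∀ w ∈ Icc 1 (A * B), (w.divisors.card) ≤ D) :
    ∑ h ∈ Icc 1 A, ∑ z ∈ Icc 1 B, G (h * z) ≤ D * ∑ w ∈ Icc 1 (A * B), G w := by
  rw [← Finset.sum_product']
  rw [← Finset.sum_fiberwise_of_maps_to (s := Icc 1 A ×ˢ Icc 1 B) (t := Icc 1 (A*B))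
    (g := fun p => p.1 * p.2), Finset.mul_sum]
  · apply Finset.sum_le_sum
    intro w hw
    calc _ = ∑ i ∈ (Icc 1 A ×ˢ Icc 1 B) with i.1 * i.2 = w, G w := by
          apply Finset.sum_congr rfl
          intro i hi
          simp only [mem_filter] at hi
          rw [hi.2]
      _ = (#{i ∈ (Icc 1 A ×ˢ Icc 1 B) | i.1 * i.2 = w} : ℝ) * G w := by
          rw [Finset.sum_const, nsmul_eq_mul]
      _ ≤ _ := by
          apply mul_le_mul_of_nonneg_right _ (hG w)
          refine le_trans ?_ (Nat.cast_le.mpr (hD w hw))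
          norm_cast
          apply Finset.card_le_card_of_injOn (fun p => p.1)
          · intro p hp
            simp only [coe_filter, mem_product, mem_Icc, Set.mem_ofPred_eq] at hp
            simp only [mem_coe, Nat.mem_divisors]
            simp only [mem_Icc] at hw
            exact ⟨⟨p.2, hp.2.symm⟩, by omega⟩
          · intro p hp p' hp' h
            simp only [coe_filter, mem_product, mem_Icc, Set.mem_ofPred_eq] at hp hp'
            simp only at h
            ext
            · exact h
            · have := hp.2.trans hp'.2.symm
              rw [h] at this
              exact Nat.eq_of_mul_eq_mul_left (by omega) this
  · intro p hp
    simp only [mem_product, mem_Icc] at hp ⊢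
    exact ⟨Nat.mul_pos hp.1.1 hp.2.1, Nat.mul_le_mul hp.1.2 hp.2.2⟩

lemma WW_bound (N : ℕ) (hN : 1 ≤ N) (D : ℕ) (d0 : ℕ)
    (hD : ∀ w ∈ Icc 1 (N ^ d0), (w.divisors.card) ≤ D) (d : ℕ) (hd : d ≤ d0) (hd1 : 1 ≤ d) (a : ℝ) :
    WW N d a ≤ d * (N:ℝ) ^ d + D ^ d * ∑ z ∈ Icc 1 (N^d), FF N (((d+1).factorial : ℝ) * z * a) := by
  have hD1 : (1:ℝ) ≤ D := by
    have := hD 1 (by simp; exact Nat.one_le_pow _ _ hN)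
    simp at this
    exact_mod_cast this
  have hsplit : ∀ f : ℕ → ℝ, (∀ h, 0 ≤ f h) → ∑ h ∈ range N, f h ≤ f 0 + ∑ h ∈ Icc 1 N, f h := by
    intro f hf
    calc ∑ h ∈ range N, f h ≤ ∑ h ∈ insert 0 (Icc 1 N), f h := by
          apply Finset.sum_le_sum_of_subset_of_nonneg
          · intro x hx
            simp at hx ⊢; omega
          · intros; exact hf _
      _ = _ := by rw [Finset.sum_insert (by simp)]
  induction d, hd1 using Nat.le_induction generalizing a with
  | base =>
    have := hsplit (fun h => FF N ((((0:ℕ):ℝ) + 2) * h * a)) (fun _ => FF_nonneg _ _)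
    simp only [WW]
    refine this.trans ?_
    have h0 := FF_le N ((((0:ℕ):ℝ) + 2) * ((0:ℕ):ℝ) * a)
    have hs : 0 ≤ ∑ x ∈ Icc 1 N, FF N (2 * (x:ℝ) * a) := Finset.sum_nonneg fun _ _ => FF_nonneg _ _
    simp [Nat.factorial] at h0 ⊢
    nlinarith
  | succ d hd1 ih =>
    have := hsplit (fun h => WW N d (((d:ℝ) + 2) * h * a)) (fun _ => WW_nonneg _ _ _)
    rw [WW]
    refine this.trans ?_
    have h0 := WW_le N d (((d:ℝ) + 2) * ((0:ℕ):ℝ) * a)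
    have h1 : ∑ h ∈ Icc 1 N, WW N d (((d:ℝ) + 2) * h * a) ≤ ∑ h ∈ Icc 1 N, (d * (N:ℝ) ^ d +
        D ^ d * ∑ z ∈ Icc 1 (N^d), FF N (((d+1+1).factorial : ℝ) * ((h * z : ℕ):ℝ) * a)) := by
      apply Finset.sum_le_sum
      intro h _
      refine (ih (by omega) _).trans_eq ?_
      congr 2
      apply Finset.sum_congr rfl
      intro z _
      congr 1
      rw [Nat.factorial_succ (d+1)]; push_cast; ring
    have h2 := collapse (fun w => FF N (((d+1+1).factorial : ℝ) * (w:ℝ) * a))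
      (fun _ => FF_nonneg _ _) N (N^d) D (by
        intro w hw
        apply hD
        simp only [mem_Icc] at hw ⊢
        refine ⟨hw.1, hw.2.trans ?_⟩
        rw [← pow_succ']
        exact Nat.pow_le_pow_right hN hd)
    rw [Finset.sum_add_distrib, Finset.sum_const, Nat.card_Icc,
      Nat.add_sub_cancel, nsmul_eq_mul, ← Finset.mul_sum] at h1
    rw [← pow_succ'] at h2
    have h3 := mul_le_mul_of_nonneg_left h2 (show (0:ℝ) ≤ D ^ d by positivity)
    push_cast at *
    have e1 : ((d:ℝ) + 1) * (N:ℝ)^(d+1) = (N:ℝ)^(d+1) + N * (d * (N:ℝ)^d) := by ring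
    have e2 : ∀ X : ℝ, (D:ℝ)^(d+1) * X = D^d * (D * X) := by intro X; ring
    rw [e1, e2]
    linarith

noncomputable def gg (N q s : ℕ) : ℝ := if s ≤ 2 then N else 3 * q / s

lemma gg_nonneg (N q s : ℕ) : 0 ≤ gg N q s := by
  unfold gg; split_ifs <;> positivity

lemma gg_sum (N q : ℕ) :
    ∑ s ∈ range (q+1), gg N q s ≤ 3 * N + 3 * q * (1 + Real.log q) := by
  have h1 : ∀ s ∈ range (q+1), gg N q s ≤ (if s ∈ range 3 then (N:ℝ) else 0) + 3 * q * (1 / (s:ℝ)) := by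
    intro s _
    unfold gg
    have : (0:ℝ) ≤ 3 * q * (1 / (s:ℝ)) := by positivity
    by_cases h : s ≤ 2
    · rw [if_pos h, if_pos (by simp; omega)]; linarith
    · rw [if_neg h, if_neg (by simp; omega)]; apply le_of_eq; ring
  refine (Finset.sum_le_sum h1).trans ?_
  rw [Finset.sum_add_distrib, ← Finset.mul_sum]
  gcongr
  · rw [Finset.sum_ite_mem, Finset.sum_const, nsmul_eq_mul]
    gcongr
    have : #(range (q+1) ∩ range 3) ≤ #(range 3) := Finset.card_le_card Finset.inter_subset_right
    rw [card_range] at this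
    exact_mod_cast this
  · rw [Finset.sum_range_succ']
    have := harmonic_le_one_add_log q
    rw [harmonic] at this
    push_cast at this
    simpa using this

lemma block (t : ℝ) (u q : ℤ) (hap : IsApproximant t u q) (N : ℕ) (β : ℝ) :
    ∑ j ∈ range q.toNat, FF N (β + j * t) ≤ 6 * N + 6 * q * (1 + Real.log q) := by
  obtain ⟨hq, hg, ht⟩ := hap
  obtain ⟨p, rfl⟩ : ∃ p : ℕ, q = p := ⟨q.toNat, by omega⟩
  simp only [Int.toNat_natCast, Int.cast_natCast] at *
  have hp : 1 ≤ p := by omega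
  have hp0 : (0:ℝ) < p := by exact_mod_cast hp
  set b : ℤ := ⌊p * β⌋ with hb
  set r : ℕ → ℕ := fun j => ((b + j * u) % p).toNat with hr
  have hr1 : ∀ j, ((r j : ℕ) : ℤ) = (b + j * u) % p := fun j =>
    Int.toNat_of_nonneg (Int.emod_nonneg _ (by omega))
  have hr2 : ∀ j, r j < p := by
    intro j
    have := Int.emod_lt_of_pos (b + j * u) (show (0:ℤ) < p by omega)
    have := hr1 j
    omega
  have hpt : ∀ j ∈ range p, FF N (β + j * t) ≤ gg N p (r j) + gg N p (p - r j) := by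
    intro j hj
    have hjp : j < p := by simpa using hj
    have hA := FF_le N (β + j * t)
    have g1 := gg_nonneg N p (r j)
    have g2 := gg_nonneg N p (p - r j)
    by_cases h1 : r j ≤ 2
    · have : gg N p (r j) = N := by simp [gg, h1]
      linarith
    by_cases h2 : p - r j ≤ 2
    · have : gg N p (p - r j) = N := by simp only [gg, if_pos h2]
      linarith
    have e1 : gg N p (r j) = 3 * p / (r j) := by simp only [gg, if_neg h1]
    have e2 : gg N p (p - r j) = 3 * p / ((p:ℝ) - r j) := by
      simp only [gg, if_neg h2]; rw [Nat.cast_sub (hr2 j).le]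
    have h1' : (3:ℝ) ≤ r j := by exact_mod_cast (by omega : 3 ≤ r j)
    have h2' : (3:ℝ) ≤ (p:ℝ) - r j := by
      rw [← Nat.cast_sub (hr2 j).le]; exact_mod_cast (by omega : 3 ≤ p - r j)
    set z := round (β + j * t) with hz
    set k := (b + j * u) / p with hk
    have hck : b + j * u = r j + p * k := by
      rw [hr1 j]; exact (Int.emod_add_mul_ediv _ _).symm
    have hckR : (b:ℝ) + j * u = r j + p * k := by exact_mod_cast hck
    have f1 : (b:ℝ) ≤ p * β := Int.floor_le _
    have f2 : p * β < (b:ℝ) + 1 := Int.lt_floor_add_one _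
    set θ := p * j * (t - u / p) with hθ
    have hθ1 : |θ| ≤ 1 := by
      rw [hθ, abs_mul, abs_of_nonneg (by positivity)]
      have hjp' : (j:ℝ) ≤ p := by exact_mod_cast hjp.le
      calc (p:ℝ) * j * |t - u / p| ≤ p * p * (1 / (p:ℝ)^2) := by gcongr
        _ = 1 := by field_simp
    rw [abs_le] at hθ1
    have hy : p * (β + j * t - z) = (p * β - b) + θ + r j + p * (k - z) := by
      have : θ = p * j * t - j * u := by rw [hθ]; field_simp
      rw [this]; linarith
    have hnd : p * nd (β + j * t) = |p * (β + j * t - z)| := by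
      rw [abs_mul, abs_of_pos hp0, nd]
    rcases le_or_gt z k with hzk | hzk
    · have hzk' : (0:ℝ) ≤ (k:ℝ) - z := by
        have : (z:ℝ) ≤ k := by exact_mod_cast hzk
        linarith
      have h3 : (r j : ℝ) / 3 ≤ p * nd (β + j * t) := by
        rw [hnd]
        refine le_trans ?_ (le_abs_self _)
        rw [hy]
        have := mul_nonneg hp0.le hzk'
        linarith
      have := FF_le_inv N (β + j * t) (r j / (3 * p)) (by positivity) (by
        rw [div_le_iff₀ (by positivity)]; linarith)
      rw [one_div_div] at this
      linarith
    · have hzk' : (k:ℝ) - z ≤ -1 := by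
        have : (k:ℝ) + 1 ≤ z := by exact_mod_cast hzk
        linarith
      have h3 : ((p:ℝ) - r j) / 3 ≤ p * nd (β + j * t) := by
        rw [hnd]
        refine le_trans ?_ (neg_le_abs _)
        rw [hy]
        have := mul_le_mul_of_nonneg_left hzk' hp0.le
        linarith
      have := FF_le_inv N (β + j * t) (((p:ℝ) - r j) / (3 * p))
        (by apply div_pos <;> linarith) (by
        rw [div_le_iff₀ (by positivity)]; linarith)
      rw [one_div_div] at this
      linarith
  have hinj : Set.InjOn r (range p) := by
    intro j hj j' hj' h
    simp only [coe_range, Set.mem_Iio] at hj hj'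
    have h1 : (b + j * u) % p = (b + j' * u) % p := by rw [← hr1, ← hr1, h]
    have h2 : (p:ℤ) ∣ (j - j') * u := by
      have := Int.emod_emod_of_dvd
      have h3 := Int.ModEq.dvd (show b + j' * u ≡ b + j * u [ZMOD p] from h1.symm)
      convert h3 using 1; ring
    have h3 : (p:ℤ) ∣ (j - j') :=
      Int.dvd_of_dvd_mul_left_of_gcd_one h2 (by rw [Int.gcd_comm]; exact hg)
    have h4 := Int.eq_zero_of_abs_lt_dvd h3 (by rw [abs_lt]; omega)
    omega
  calc _ ≤ ∑ j ∈ range p, (gg N p (r j) + gg N p (p - r j)) := Finset.sum_le_sum hpt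
    _ = ∑ s ∈ (range p).image r, (gg N p s + gg N p (p - s)) := by
        rw [Finset.sum_image hinj]
    _ ≤ ∑ s ∈ range (p+1), (gg N p s + gg N p (p - s)) := by
        apply Finset.sum_le_sum_of_subset_of_nonneg
        · intro s hs
          simp only [mem_image, mem_range] at hs ⊢
          obtain ⟨j, _, rfl⟩ := hs
          have := hr2 j
          omega
        · intro s _ _
          exact add_nonneg (gg_nonneg _ _ _) (gg_nonneg _ _ _)
    _ = 2 * ∑ s ∈ range (p+1), gg N p s := by
        rw [Finset.sum_add_distrib]
        have := Finset.sum_range_reflect (fun s => gg N p s) (p+1)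
        simp only [Nat.add_sub_cancel] at this
        rw [this]; ring
    _ ≤ _ := by
        have := gg_sum N p
        linarith

lemma blocks (t : ℝ) (u q : ℤ) (hap : IsApproximant t u q) (N : ℕ) (H : ℕ) :
    ∑ w ∈ Icc 1 H, FF N (w * t) ≤ ((H:ℝ) / q + 1) * (6 * N + 6 * q * (1 + Real.log q)) := by
  have hq := hap.1
  have hq' : (1:ℝ) ≤ q := by exact_mod_cast hq
  have hX : 0 ≤ 6 * N + 6 * q * (1 + Real.log q) := by
    have := Real.log_nonneg hq'
    positivity
  have key : ∀ B : ℕ, ∑ w ∈ range (B * q.toNat), FF N (w * t) ≤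
      B * (6 * N + 6 * q * (1 + Real.log q)) := by
    intro B
    induction B with
    | zero => simp
    | succ B ih =>
      rw [add_mul, one_mul, Finset.sum_range_add]
      have := block t u q hap N ((B * q.toNat : ℕ) * t)
      have e : ∀ x : ℕ, ((B * q.toNat + x : ℕ) : ℝ) * t = ((B * q.toNat : ℕ) : ℝ) * t + x * t := by
        intro x; push_cast; ring
      simp only [e]
      push_cast at *
      linarith
  have hqn : 0 < q.toNat := by omega
  calc _ ≤ ∑ w ∈ range ((H / q.toNat + 1) * q.toNat), FF N (w * t) := by
        apply Finset.sum_le_sum_of_subset_of_nonneg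
        · intro w hw
          simp only [mem_Icc, mem_range] at hw ⊢
          have := Nat.lt_div_mul_add hqn (a := H)
          rw [add_mul, one_mul]; omega
        · intros; exact FF_nonneg _ _
    _ ≤ _ := key _
    _ ≤ _ := by
        gcongr
        push_cast
        gcongr
        have : ((q.toNat : ℕ) : ℝ) = q := by
          have : ((q.toNat : ℕ) : ℤ) = q := Int.toNat_of_nonneg (by omega)
          exact_mod_cast this
        rw [← this]
        exact Nat.cast_div_le

lemma scale_sum (N F Z : ℕ) (hF : 1 ≤ F) (t : ℝ) :
    ∑ z ∈ Icc 1 Z, FF N ((F:ℝ) * z * t) ≤ ∑ w ∈ Icc 1 (F * Z), FF N (w * t) := by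
  calc _ = ∑ w ∈ (Icc 1 Z).image (fun z => F * z), FF N (w * t) := by
        rw [Finset.sum_image]
        · simp
        · intro a _ b _ h
          exact Nat.eq_of_mul_eq_mul_left hF h
    _ ≤ _ := by
        apply Finset.sum_le_sum_of_subset_of_nonneg
        · intro w hw
          simp only [mem_image, mem_Icc] at hw ⊢
          obtain ⟨z, hz, rfl⟩ := hw
          exact ⟨Nat.mul_pos hF hz.1, Nat.mul_le_mul_left _ hz.2⟩
        · intros; exact FF_nonneg _ _

lemma weyl_bound (d : ℕ) (hd : 1 ≤ d) (Δ : ℝ) (hΔ0 : 0 < Δ) (hΔ1 : Δ < 1) :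
    ∃ C : ℝ, 0 < C ∧ ∀ N : ℕ, 1 ≤ N → ∀ t : ℝ, ∀ u q : ℤ, IsApproximant t u q →
      (N:ℝ) ^ Δ < q → (q:ℝ) ≤ (N:ℝ) ^ (((d+1 : ℕ) : ℝ) - Δ) →
      ∀ Q : Polynomial ℝ, Q.natDegree ≤ d + 1 → Q.coeff (d+1) = t →
      ‖∑ k ∈ range N, ee (Q.eval (k:ℝ))‖ ≤ C * (N:ℝ) ^ (1 - Δ / 2 ^ (d+1)) := by
  have hd0 : (0:ℝ) < d := by exact_mod_cast hd
  obtain ⟨C0, hC0, hdiv⟩ := div_bound (Δ / (4 * d * d)) (by positivity)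
  set C1 : ℝ := 1 + (d + 1) * (4 / Δ) with hC1
  have hC1' : 0 < C1 := by positivity
  set C2 : ℝ := d + C0 ^ d * (24 * (d+1).factorial * C1) with hC2
  have hd1 : (1:ℝ) ≤ d := by exact_mod_cast hd
  have hC2' : 1 ≤ C2 := by
    have : 0 ≤ C0 ^ d * (24 * (d+1).factorial * C1) := by positivity
    linarith
  refine ⟨2 * C2, by positivity, ?_⟩
  intro N hN t u q hap hq1 hq2 Q hQ hQt
  set X : ℝ := (N : ℝ) with hXdef
  have hX1 : 1 ≤ X := by rw [hXdef]; exact_mod_cast hN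
  have hX0 : 0 < X := by linarith
  have hq0 : (1:ℝ) ≤ q := by exact_mod_cast hap.1
  -- divisor bound
  set D : ℕ := ⌊C0 * (X ^ d) ^ (Δ / (4 * d * d))⌋₊ with hDdef
  have hD : ∀ w ∈ Icc 1 (N ^ d), w.divisors.card ≤ D := by
    intro w hw
    simp only [mem_Icc] at hw
    rw [hDdef]
    apply Nat.le_floor
    refine (hdiv w (by omega)).trans ?_
    have : (w:ℝ) ≤ X ^ d := by rw [hXdef]; exact_mod_cast hw.2
    gcongr
  have hDd : (D:ℝ) ^ d ≤ C0 ^ d * X ^ (Δ / 4) := by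
    have h1 : (D:ℝ) ≤ C0 * (X ^ d) ^ (Δ / (4 * d * d)) := Nat.floor_le (by positivity)
    calc (D:ℝ) ^ d ≤ (C0 * (X ^ d) ^ (Δ / (4 * d * d))) ^ d := by gcongr
      _ = C0 ^ d * X ^ (Δ / 4) := by
        rw [mul_pow, ← Real.rpow_natCast X d, ← Real.rpow_mul hX0.le,
          ← Real.rpow_natCast (X ^ _) d, ← Real.rpow_mul hX0.le]
        congr 2
        field_simp
  have hWd := weyl_diff N hN d Q hQ N le_rfl
  rw [hQt] at hWd
  have hWW := WW_bound N hN D d hD d le_rfl hd t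
  have hsc := scale_sum N (d+1).factorial (N^d) (Nat.factorial_pos _) t
  have hbl := blocks t u q hap N ((d+1).factorial * N^d)
  -- logs
  have hlog : 1 + Real.log q ≤ C1 * X ^ (Δ / 4) := by
    have h1 : Real.log q ≤ (d + 1) * Real.log X := by
      calc Real.log q ≤ Real.log (X ^ (((d+1 : ℕ) : ℝ) - Δ)) := Real.log_le_log (by linarith) hq2
        _ = (((d+1 : ℕ) : ℝ) - Δ) * Real.log X := Real.log_rpow hX0 _
        _ ≤ _ := by
          have := Real.log_nonneg hX1
          push_cast
          gcongr
          linarith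
    have h2 : Real.log X ≤ X ^ (Δ/4) / (Δ/4) := Real.log_le_rpow_div hX0.le (by positivity)
    have h3 : (1:ℝ) ≤ X ^ (Δ/4) := Real.one_le_rpow hX1 (by positivity)
    calc 1 + Real.log q ≤ X ^ (Δ/4) + (d + 1) * (X ^ (Δ/4) / (Δ/4)) := by
          have : ((d:ℝ) + 1) * Real.log X ≤ (d + 1) * (X ^ (Δ/4) / (Δ/4)) := by gcongr
          linarith
      _ = _ := by rw [hC1]; field_simp
  set G := C1 * X ^ (Δ / 4) with hG
  have hG1 : 1 ≤ G := by
    have := Real.log_nonneg hq0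
    linarith
  set Y := X ^ (((d+1 : ℕ) : ℝ) - Δ) with hY
  have hY0 : 0 < Y := by positivity
  set f : ℝ := ((d+1).factorial : ℝ) with hf
  have hf1 : 1 ≤ f := by rw [hf]; exact_mod_cast Nat.succ_le_of_lt (Nat.factorial_pos _)
  have y1 : X ^ d * X / q ≤ Y := by
    rw [div_le_iff₀ (by linarith)]
    calc X ^ d * X = Y * X ^ Δ := by
          rw [hY, ← Real.rpow_add hX0, ← pow_succ, ← Real.rpow_natCast]
          congr 1; ring
      _ ≤ Y * q := by gcongr
  have y2 : X ^ d ≤ Y := by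
    rw [hY, ← Real.rpow_natCast]
    apply Real.rpow_le_rpow_of_exponent_le hX1
    push_cast; linarith
  have y3 : X ≤ Y := by
    calc X = X ^ (1:ℝ) := (Real.rpow_one X).symm
      _ ≤ Y := by
        apply Real.rpow_le_rpow_of_exponent_le hX1
        push_cast; linarith
  have hsum : ∑ z ∈ Icc 1 (N^d), FF N (f * z * t) ≤ 24 * f * C1 * (X ^ (Δ/4) * Y) := by
    refine (hsc.trans hbl).trans ?_
    push_cast
    rw [← hXdef, ← hf]
    calc (f * X ^ d / q + 1) * (6 * X + 6 * q * (1 + Real.log q))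
        ≤ (f * X ^ d / q + 1) * (6 * (X * G) + 6 * q * G) := by
          have : X ≤ X * G := le_mul_of_one_le_right hX0.le hG1
          gcongr
      _ = 6 * G * (f * (X ^ d * X / q) + f * X ^ d + X + q) := by field_simp; ring
      _ ≤ 6 * G * (f * Y + f * Y + f * Y + f * Y) := by
          have : Y ≤ f * Y := le_mul_of_one_le_left hY0.le hf1
          gcongr
          · linarith
          · linarith
      _ = _ := by rw [hG]; ring
  have hW : WW N d t ≤ C2 * X ^ (((d+1:ℕ):ℝ) - Δ/2) := by
    refine hWW.trans ?_
    have e1 : X ^ d ≤ X ^ (((d+1:ℕ):ℝ) - Δ/2) := by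
      rw [← Real.rpow_natCast]
      apply Real.rpow_le_rpow_of_exponent_le hX1
      push_cast; linarith
    have e2 : X ^ (Δ/4) * (X ^ (Δ/4) * Y) = X ^ (((d+1:ℕ):ℝ) - Δ/2) := by
      rw [hY, ← Real.rpow_add hX0, ← Real.rpow_add hX0]
      congr 1; ring
    calc _ ≤ d * X ^ (((d+1:ℕ):ℝ) - Δ/2) +
          (C0 ^ d * X ^ (Δ/4)) * (24 * f * C1 * (X ^ (Δ/4) * Y)) := by
            have hs0 : 0 ≤ ∑ z ∈ Icc 1 (N^d), FF N (f * z * t) :=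
              Finset.sum_nonneg fun _ _ => FF_nonneg _ _
            gcongr
      _ = d * X ^ (((d+1:ℕ):ℝ) - Δ/2) +
          C0 ^ d * (24 * f * C1) * (X ^ (Δ/4) * (X ^ (Δ/4) * Y)) := by ring
      _ = _ := by rw [e2, hC2]; ring
  set S := ‖∑ k ∈ range N, ee (Q.eval (k:ℝ))‖ with hS
  have hp : S ^ (2^d) ≤ (2 * C2 * X ^ (1 - Δ / 2 ^ (d+1))) ^ (2^d) := by
    have hpos : 0 < X ^ (d+1) := by positivity
    rw [← mul_le_mul_iff_left₀ hpos]
    refine hWd.trans ?_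
    rw [← hXdef]
    calc 2 ^ 2 ^ d * X ^ 2 ^ d * WW N d t
        ≤ 2 ^ 2 ^ d * X ^ 2 ^ d * (C2 ^ (2^d) * X ^ (((d+1:ℕ):ℝ) - Δ/2)) := by
          have : C2 ≤ C2 ^ (2^d) := le_self_pow₀ hC2' (by positivity)
          gcongr
          exact hW.trans (by gcongr)
      _ = _ := by
          rw [mul_pow, mul_pow, ← Real.rpow_natCast (X ^ (1 - _)), ← Real.rpow_mul hX0.le,
            ← Real.rpow_natCast X (2^d), ← Real.rpow_natCast X (d+1)]
          have : X ^ ((2^d : ℕ):ℝ) * X ^ (((d+1:ℕ):ℝ) - Δ/2) =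
              X ^ ((1 - Δ / 2 ^ (d+1)) * ((2^d : ℕ):ℝ)) * X ^ ((d+1:ℕ):ℝ) := by
            rw [← Real.rpow_add hX0, ← Real.rpow_add hX0]
            congr 1
            push_cast
            rw [pow_succ]
            field_simp
            ring
          linear_combination 2 ^ 2 ^ d * C2 ^ 2 ^ d * this
  exact le_of_pow_le_pow_left₀ (by positivity) (by positivity) hp

lemma abel (f : ℕ → ℂ) (c : ℕ → ℂ) (J : ℕ) : ∑ i ∈ range J, f i * c i =
    (∑ i ∈ range J, f i) * c J + ∑ i ∈ range J, (∑ l ∈ range (i+1), f l) * (c i - c (i+1)) := by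
  induction J with
  | zero => simp
  | succ J ih =>
    rw [Finset.sum_range_succ, ih, Finset.sum_range_succ (fun i => _ * (c i - c (i+1))),
      Finset.sum_range_succ f J]
    ring

lemma tele (δ : ℝ) (h0 : 0 < δ) (h1 : δ ≤ 1) (y : ℝ) (hy : 0 < y) :
    y ^ (-δ) / (y + 1) ≤ (1/δ) * (y ^ (-δ) - (y+1) ^ (-δ)) := by
  have hb := rpow_one_add_le_one_add_mul_self (s := -1/(y+1)) (p := δ)
    (by rw [le_div_iff₀ (by linarith)]; linarith) h0.le h1
  have e : 1 + -1/(y+1) = y / (y+1) := by field_simp; ring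
  rw [e, Real.div_rpow hy.le (by linarith)] at hb
  have e2 : (y+1) ^ (-δ) = y ^ (-δ) * (y ^ δ / (y+1) ^ δ) := by
    rw [Real.rpow_neg hy.le, Real.rpow_neg (by linarith)]
    have : y ^ δ ≠ 0 := by positivity
    field_simp
  have hyp : 0 < y ^ (-δ) := by positivity
  have h3 : (y+1) ^ (-δ) ≤ y ^ (-δ) * (1 + δ * (-1/(y+1))) := by
    rw [e2]; gcongr
  calc y ^ (-δ) / (y + 1) = (1/δ) * (y ^ (-δ) - y ^ (-δ) * (1 + δ * (-1/(y+1)))) := by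
        field_simp; ring
    _ ≤ _ := by gcongr

lemma abel_bound (δ : ℝ) (h0 : 0 < δ) (h1 : δ ≤ 1) (C : ℝ) (hC : 0 ≤ C) (f : ℕ → ℂ)
    (hf : ∀ j : ℕ, ‖∑ i ∈ range j, f i‖ ≤ C * (j:ℝ) ^ (1 - δ)) (a : ℕ) (J : ℕ) :
    ‖∑ i ∈ range J, f i / ((a + 1 + i : ℕ) : ℂ)‖ ≤ C * (1 + 1/δ) * ((a:ℝ) + 1) ^ (-δ) := by
  have e := abel f (fun i => (((a + 1 + i : ℕ) : ℂ))⁻¹) J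
  simp only [div_eq_mul_inv]
  rw [e]
  refine (norm_add_le _ _).trans ?_
  have b1 : ‖(∑ i ∈ range J, f i) * (((a + 1 + J : ℕ) : ℂ))⁻¹‖ ≤ C * ((a:ℝ) + 1) ^ (-δ) := by
    rw [norm_mul, norm_inv, Complex.norm_natCast]
    push_cast
    have hy : 0 < (a:ℝ) + 1 + J := by positivity
    calc _ ≤ (C * (J:ℝ) ^ (1-δ)) * ((a:ℝ) + 1 + J)⁻¹ := by gcongr; exact hf J
      _ ≤ (C * ((a:ℝ) + 1 + J) ^ (1-δ)) * ((a:ℝ) + 1 + J)⁻¹ := by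
          gcongr
          have : (0:ℝ) ≤ a := by positivity
          linarith
      _ = C * ((a:ℝ) + 1 + J) ^ (-δ) := by
          rw [mul_assoc, ← Real.rpow_neg_one, ← Real.rpow_add hy]; congr 2; ring
      _ ≤ _ := by
          gcongr C * ?_
          apply Real.rpow_le_rpow_of_nonpos (by positivity) (by simp) (by linarith)
  have b2 : ∀ i ∈ range J, ‖(∑ l ∈ range (i+1), f l) *
      ((((a + 1 + i : ℕ) : ℂ))⁻¹ - (((a + 1 + (i+1) : ℕ) : ℂ))⁻¹)‖ ≤
      C * ((1/δ) * (((a:ℝ) + 1 + i) ^ (-δ) - ((a:ℝ) + 1 + (i+1 : ℕ)) ^ (-δ))) := by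
    intro i _
    set y : ℝ := (a:ℝ) + 1 + i with hy
    have hy0 : 0 < y := by positivity
    have e1 : (((a + 1 + i : ℕ) : ℂ))⁻¹ - (((a + 1 + (i+1) : ℕ) : ℂ))⁻¹ =
        ((1 / (y * (y+1)) : ℝ) : ℂ) := by
      have h1 : ((a + 1 + i : ℕ) : ℂ) = ((y:ℝ):ℂ) := by rw [hy]; push_cast; ring
      have h2 : ((a + 1 + (i+1) : ℕ) : ℂ) = ((y+1:ℝ):ℂ) := by rw [hy]; push_cast; ring
      rw [h1, h2, ← Complex.ofReal_inv, ← Complex.ofReal_inv, ← Complex.ofReal_sub]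
      congr 1
      field_simp
      ring
    rw [e1, norm_mul, Complex.norm_real, Real.norm_of_nonneg (by positivity)]
    have e2 : (a:ℝ) + 1 + (i+1 : ℕ) = y + 1 := by rw [hy]; push_cast; ring
    rw [e2]
    calc _ ≤ (C * ((i+1 : ℕ):ℝ) ^ (1-δ)) * (1 / (y * (y+1))) := by gcongr; exact hf (i+1)
      _ ≤ (C * y ^ (1-δ)) * (1 / (y * (y+1))) := by
          gcongr
          rw [hy]; push_cast
          have : (0:ℝ) ≤ a := by positivity
          linarith
      _ = C * (y ^ (-δ) / (y+1)) := by
          have : y ^ (1-δ) = y * y ^ (-δ) := by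
            rw [sub_eq_add_neg, Real.rpow_add hy0, Real.rpow_one]
          rw [this]; field_simp
      _ ≤ _ := by gcongr; exact tele δ h0 h1 y hy0
  have b3 := (norm_sum_le _ _).trans (Finset.sum_le_sum b2)
  rw [← Finset.mul_sum, ← Finset.mul_sum,
    Finset.sum_range_sub' (fun i : ℕ => ((a:ℝ) + 1 + i) ^ (-δ))] at b3
  have b4 : C * (1 / δ * (((a:ℝ) + 1 + (0:ℕ)) ^ (-δ) - ((a:ℝ) + 1 + J) ^ (-δ))) ≤
      C * (1/δ * ((a:ℝ) + 1) ^ (-δ)) := by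
    gcongr
    have : 0 ≤ ((a:ℝ) + 1 + J) ^ (-δ) := by positivity
    simp
    exact this
  have := b1.trans_eq (show C * ((a:ℝ) + 1) ^ (-δ) = C * ((a:ℝ) + 1) ^ (-δ) from rfl)
  calc _ ≤ C * ((a:ℝ) + 1) ^ (-δ) + C * (1/δ * ((a:ℝ) + 1) ^ (-δ)) := add_le_add b1 (b3.trans b4)
    _ = _ := by ring

theorem stmt14 (n : ℕ) (hn : 2 ≤ n) (Δ : ℝ) (hΔ0 : 0 < Δ) (hΔ1 : Δ < 1)
    (hΔ2 : n = 2 → Δ < 1 / 2) (m : ℤ) (hm : 2 ≤ m) :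
    ∃ C > (0 : ℝ), ∀ t ∈ Aset n Δ m, ∀ P : Polynomial ℝ, P.Monic → P.natDegree = n →
      ∀ x K L : ℝ, (m : ℝ) < K → K + (m : ℝ) < L →
        ‖∑ k ∈ Finset.Icc (⌊K⌋ + 1) ⌊L⌋,
            ee (t * P.eval (k : ℝ) + x * (k : ℝ)) / (k : ℂ)‖ ≤
          C * (K ^ (-(Δ / 2 ^ n)) + L ^ (-(Δ / 2 ^ n))) := by
  obtain ⟨d, rfl⟩ : ∃ d, n = d + 1 := ⟨n - 1, by omega⟩
  obtain ⟨C1, hC1, hW⟩ := weyl_bound d (by omega) Δ hΔ0 hΔ1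
  set δ := Δ / 2 ^ (d+1) with hδ
  have hδ0 : 0 < δ := by positivity
  have hδ1 : δ ≤ 1 := by
    rw [hδ, div_le_one (by positivity)]
    have : (1:ℝ) ≤ 2 ^ (d+1) := one_le_pow₀ (by norm_num)
    linarith
  have hm0 : (2:ℝ) ≤ m := by exact_mod_cast hm
  refine ⟨(C1 + m) * (1 + 1/δ), by positivity, ?_⟩
  intro t ht P hP hPn x K L hK hL
  have hfl : m ≤ ⌊K⌋ := Int.le_floor.mpr hK.le
  have hKL : ⌊K⌋ ≤ ⌊L⌋ := Int.floor_le_floor (by linarith)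
  obtain ⟨a, ha⟩ : ∃ a : ℕ, ⌊K⌋ = a := ⟨⌊K⌋.toNat, by omega⟩
  obtain ⟨J, hJ⟩ : ∃ J : ℕ, ⌊L⌋ = a + J := ⟨(⌊L⌋ - ⌊K⌋).toNat, by omega⟩
  set Q0 : Polynomial ℝ := Polynomial.C t * P + Polynomial.C x * Polynomial.X with hQ0
  set Q : Polynomial ℝ := Polynomial.taylor ((a:ℝ) + 1) Q0 with hQ
  have hQ0d : Q0.natDegree ≤ d + 1 := by
    rw [hQ0]
    refine (Polynomial.natDegree_add_le _ _).trans (max_le ?_ ?_)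
    · exact (Polynomial.natDegree_C_mul_le _ _).trans hPn.le
    · refine (Polynomial.natDegree_C_mul_le _ _).trans ?_
      rw [Polynomial.natDegree_X]; omega
  have hQd : Q.natDegree ≤ d + 1 := by rw [hQ, Polynomial.natDegree_taylor]; exact hQ0d
  have hQc : Q.coeff (d+1) = t := by
    have hd' : (Polynomial.hasseDeriv (d+1) Q0).natDegree < 1 := by
      have := Polynomial.natDegree_hasseDeriv_le Q0 (d+1); omega
    have hPc : P.coeff (d+1) = 1 := by rw [← hPn]; exact hP
    have hXc : (Polynomial.X : Polynomial ℝ).coeff (d+1) = 0 := by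
      rw [Polynomial.coeff_X, if_neg (by omega)]
    rw [hQ, Polynomial.taylor_coeff, Polynomial.eval_eq_sum_range' hd']
    simp [Polynomial.hasseDeriv_coeff, hQ0, hPc, hXc]
  set f : ℕ → ℂ := fun i => ee (Q.eval (i:ℝ)) with hf
  have hT : ∀ j : ℕ, ‖∑ i ∈ range j, f i‖ ≤ (C1 + m) * (j:ℝ) ^ (1 - δ) := by
    intro j
    have hjn : (0:ℝ) ≤ (j:ℝ) ^ (1 - δ) := by positivity
    rcases le_or_gt m j with hmj | hmj
    · obtain ⟨u, q, hap, h1, h2⟩ := ht.2 (j:ℝ) (by exact_mod_cast hmj)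
      refine (hW j (by omega) t u q hap h1 h2 Q hQd hQc).trans ?_
      gcongr
      linarith
    · have h1 : ‖∑ i ∈ range j, f i‖ ≤ j := by
        refine (norm_sum_le _ _).trans ?_
        simp [hf, ee_norm]
      rcases Nat.eq_zero_or_pos j with rfl | hj
      · simp
        have : (0:ℝ) ≤ 0 ^ (1 - δ) := by positivity
        positivity
      · have hj1 : (1:ℝ) ≤ j := by exact_mod_cast hj
        have hjm : (j:ℝ) ≤ m := by exact_mod_cast hmj.le
        have : (1:ℝ) ≤ (j:ℝ) ^ (1 - δ) := Real.one_le_rpow hj1 (by linarith)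
        nlinarith
  have hsum : ∑ k ∈ Finset.Icc (⌊K⌋ + 1) ⌊L⌋, ee (t * P.eval (k : ℝ) + x * (k : ℝ)) / (k : ℂ) =
      ∑ i ∈ range J, f i / ((a + 1 + i : ℕ) : ℂ) := by
    symm
    apply Finset.sum_bij (fun (i : ℕ) _ => ((a + 1 + i : ℕ) : ℤ))
    · intro i hi
      simp only [mem_range, mem_Icc] at hi ⊢
      omega
    · intro i _ j _ h
      omega
    · intro k hk
      simp only [mem_Icc] at hk
      exact ⟨(k - (a+1)).toNat, by simp; omega, by omega⟩
    · intro i _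
      simp only [hf, hQ, hQ0, Polynomial.taylor_eval]
      congr 2
      · simp
        ring_nf
  rw [hsum]
  refine (abel_bound δ hδ0 hδ1 (C1 + m) (by positivity) f hT a J).trans ?_
  have hK0 : 0 < K := by linarith
  have hL0 : 0 < L := by linarith
  have hKa : K ≤ (a:ℝ) + 1 := by
    have := Int.lt_floor_add_one K
    rw [ha] at this
    push_cast at this
    exact this.le
  gcongr
  have h1 : ((a:ℝ) + 1) ^ (-δ) ≤ K ^ (-δ) :=
    Real.rpow_le_rpow_of_nonpos hK0 hKa (by linarith)
  have h2 : 0 ≤ L ^ (-δ) := by positivity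
  linarith
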